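/- Let F : T → T be a polynomial-like branched covering of a simplicial tree, and let J(F) = ∂T ∖ {∞} carry the subspace topology from the space of ends ∂T. Then there exists a unique Borel probability measure μ_F on J(F) such that μ_F(J(F,v)) = μ(v) for every vertex v, where J(F,v) is the set of ends below v and μ is the mass function. Moreover μ_F is invariant under the induced boundary map F : J(F) → J(F) (i.e., μ_F(F^{−1}(A)) = μ_F(A) for every Borel set A), and μ_F has no atoms. -/

import Mathlib

open SimpleGraph Function Opposite

/-- A locally finite simplicial tree together with a self-map that is a
branched covering: a simplicial map (edges map onto edges) such that the
induced map on edges adjacent to any vertex is surjective onto the edges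
adjacent to the image vertex, and every vertex has finitely many preimages. -/
structure TreeDyn (V : Type) where
  G : SimpleGraph V
  isTree : G.IsTree
  locFin : ∀ v : V, (G.neighborSet v).Finite
  F : V → V
  adjMap : ∀ ⦃v w : V⦄, G.Adj v w → G.Adj (F v) (F w)
  edgeSurj : ∀ ⦃v w' : V⦄, G.Adj (F v) w' → ∃ w : V, G.Adj v w ∧ F w = w'
  finFibers : ∀ v' : V, {v : V | F v = v'}.Finite

namespace TreeDyn

variable {V : Type}

/-- A local degree function for the branched covering `T.F`: positive on
vertices and edges (edges adjacent to `v` are recorded by their other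
endpoint), symmetric on edges, satisfying the Riemann–Hurwitz style
inequality `2 deg(v) - 2 ≥ Σ (deg e - 1)` at each vertex, and the local
equality `deg v = Σ {deg e' : e' adjacent to v, F(e') = F(e)}` for each
edge `e` adjacent to `v`. -/
def IsLocalDeg (T : TreeDyn V) (dV : V → ℕ) (dE : V → V → ℕ) : Prop :=
  (∀ v w : V, dE v w = dE w v) ∧
  (∀ v : V, 0 < dV v) ∧
  (∀ ⦃v w : V⦄, T.G.Adj v w → 0 < dE v w) ∧
  (∀ v : V, (∑ᶠ w ∈ T.G.neighborSet v, (dE v w - 1)) + 2 ≤ 2 * dV v) ∧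
  (∀ ⦃v w : V⦄, T.G.Adj v w →
    dV v = ∑ᶠ w' ∈ {w' : V | T.G.Adj v w' ∧ T.F w' = T.F w}, dE v w')

/-- `x` and `y` are in the same grand orbit if `F^[n] x = F^[m] y` for some `n, m > 0`. -/
def GrandOrbit (T : TreeDyn V) (x y : V) : Prop :=
  ∃ n m : ℕ, 0 < n ∧ 0 < m ∧ T.F^[n] x = T.F^[m] y

end TreeDyn

/-- The natural topology on the space of ends of a graph: the subspace
topology induced from the product of the (discrete) spaces of components
of complements of finite sets. -/
def endTop {V : Type} (G : SimpleGraph V) : TopologicalSpace G.end :=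
  TopologicalSpace.induced Subtype.val
    (⨅ K : (Finset V)ᵒᵖ, TopologicalSpace.induced (fun f => f K) ⊥)

/-- An end is isolated if it is an isolated point of the space of ends. -/
def IsIsolatedEnd {V : Type} (G : SimpleGraph V) (e : G.end) : Prop :=
  @IsOpen G.end (endTop G) {e}

namespace TreeDyn

variable {V : Type}

/-- `T` is polynomial-like with distinguished end `infty`:
(II) a local degree function exists, (I) `infty` is the unique isolated end,
(III) no vertex has valence one, and (IV) the grand orbit of every vertex
contains a vertex of valence at least three. -/
def IsPolyLike (T : TreeDyn V) (infty : T.G.end) : Prop :=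
  (∃ dV dE, T.IsLocalDeg dV dE) ∧
  IsIsolatedEnd T.G infty ∧
  (∀ e : T.G.end, IsIsolatedEnd T.G e → e = infty) ∧
  (∀ v : V, (T.G.neighborSet v).ncard ≠ 1) ∧
  (∀ v : V, ∃ w : V, T.GrandOrbit v w ∧ 3 ≤ (T.G.neighborSet w).ncard)

/-- The vertex `x` lies below the vertex `v` (the path from `x` to the
end `infty` passes through `v`): either `x = v`, or `x` and `infty`
determine different components of the complement of `{v}`. -/
def Below (T : TreeDyn V) (infty : T.G.end) (v x : V) : Prop :=
  x = v ∨ ∃ h : x ∉ (({v} : Finset V) : Set V),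
    T.G.componentComplMk h ≠ infty.val (op ({v} : Finset V))

/-- The end `p` lies below the vertex `v` (the path from `p` to `infty`
passes through `v`). -/
def EndBelow (T : TreeDyn V) (infty : T.G.end) (v : V) (p : T.G.end) : Prop :=
  p.val (op ({v} : Finset V)) ≠ infty.val (op ({v} : Finset V))

/-- `v₀` is the base of the tree: the vertex of valence ≥ 3 closest to
`infty`, i.e. every vertex of valence ≥ 3 lies below it. -/
def IsBase (T : TreeDyn V) (infty : T.G.end) (v₀ : V) : Prop :=
  3 ≤ (T.G.neighborSet v₀).ncard ∧
  ∀ w : V, 3 ≤ (T.G.neighborSet w).ncard → T.Below infty v₀ w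

open Classical in
/-- The combinatorial height relative to the base `v₀`: `|h v|` is the
graph distance to `v₀`, with `h v ≥ 0` exactly when `v` lies on the ray
from `v₀` to `infty` (i.e. `v₀` lies below `v`). -/
noncomputable def height (T : TreeDyn V) (infty : T.G.end) (v₀ : V) (v : V) : ℤ :=
  if T.Below infty v v₀ then (T.G.dist v₀ v : ℤ) else -(T.G.dist v₀ v : ℤ)

/-- `Dg` is the global degree of `T.F`: for every edge `{v,w}`, the sum of
the degrees of the edges mapping onto it equals `Dg`. -/
def IsGlobalDeg (T : TreeDyn V) (dE : V → V → ℕ) (Dg : ℕ) : Prop :=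
  ∀ ⦃v w : V⦄, T.G.Adj v w →
    Dg = ∑ᶠ a ∈ {a : V | T.F a = v}, ∑ᶠ b ∈ {b : V | T.G.Adj a b ∧ T.F b = w}, dE a b

/-- The critical multiplicity of a vertex. -/
noncomputable def multV (T : TreeDyn V) (dV : V → ℕ) (dE : V → V → ℕ) (v : V) : ℕ :=
  2 * dV v - 2 - ∑ᶠ w ∈ T.G.neighborSet v, (dE v w - 1)

/-- The critical multiplicity of an end `p ≠ infty`: the limiting
(= minimal) value of `dV` along the path from `infty` to `p`, minus one. -/
noncomputable def multEnd (T : TreeDyn V) (infty : T.G.end) (dV : V → ℕ) (p : T.G.end) : ℕ :=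
  sInf {d : ℕ | ∃ v : V, T.EndBelow infty v p ∧ dV v = d} - 1

/-- `μ` is the mass function: `μ v = 1` for `h(v) ≥ 0` and
`μ(F v) = (deg F / deg v) · μ v`. -/
def IsMass (T : TreeDyn V) (infty : T.G.end) (v₀ : V) (dV : V → ℕ) (Dg : ℕ)
    (μ : V → ℚ) : Prop :=
  (∀ v : V, 0 ≤ T.height infty v₀ v → μ v = 1) ∧
  (∀ v : V, μ (T.F v) = ((Dg : ℚ) / (dV v : ℚ)) * μ v)

end TreeDyn

/-- The Julia set of `T`: the set of ends other than `infty`. -/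
def JSet {V : Type} (T : TreeDyn V) (infty : T.G.end) : Type :=
  {p : T.G.end // p ≠ infty}

/-- The topology on the Julia set, induced from the topology on ends. -/
noncomputable def JTop {V : Type} (T : TreeDyn V) (infty : T.G.end) :
    TopologicalSpace (JSet T infty) :=
  TopologicalSpace.induced Subtype.val (endTop T.G)

/-- The Borel σ-algebra on the Julia set. -/
noncomputable def JBorel {V : Type} (T : TreeDyn V) (infty : T.G.end) :
    MeasurableSpace (JSet T infty) :=
  @borel (JSet T infty) (JTop T infty)

/-!
Orient the tree towards `∞`, so that every vertex has a parent and the ends in `J(F)` below `v`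
are the rays of iterated children of `v`. The covering commutes with the parent map: a vertex where
this fails starts a ray of such failures, far along which the covering folds all the descendants of
a vertex onto the ray to `∞`; as fibers have at most `deg F` elements, the numbers of descendants
stay bounded, and an end other than `∞` would be isolated. Condition (IV) then makes the base, and
with it every vertex, escape to `∞` under iteration.

The mass of a vertex is the sum of the masses of its preimages and, by induction along the escaping
orbit, the sum of the masses of its children. The sets `J(F, v)` are compact and open and form a
π-system that generates the Borel sets. Additivity over children gives a measure with these masses
as a weak limit of combinations of point masses, and additivity over preimages gives its invariance.
A vertex strictly below the base has degree less than `deg F`, so the masses decay geometrically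
along the ray to any end in `J(F)`, and there are no atoms.
-/

open Filter Topology

/-! ### Ends and the orientation of the tree -/

section Ends

variable {V : Type*} {G : SimpleGraph V}

theorem componentCompl_eq_of_mem {K : Set V} {C D : G.ComponentCompl K} {y : V} (hC : y ∈ C)
    (hD : y ∈ D) : C = D :=
  hC.choose_spec.symm.trans hD.choose_spec

theorem mem_componentCompl_of_walk {K : Set V} {C : G.ComponentCompl K} {x y : V} (p : G.Walk x y)
    (hp : ∀ z ∈ p.support, z ∉ K) (hx : x ∈ C) : y ∈ C := by
  induction p with
  | nil => exact hx
  | cons h q ih =>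
    exact ih (fun z hz => hp z (by simp [hz])) (ComponentCompl.mem_of_adj _ _ hx (hp _ (by simp)) h)

theorem exists_isPath_of_mem_componentCompl {K : Set V} {C : G.ComponentCompl K} {x y : V}
    (hx : x ∈ C) (hy : y ∈ C) : ∃ p : G.Walk x y, p.IsPath ∧ ∀ z ∈ p.support, z ∉ K := by
  classical
  obtain ⟨hxK, hxC⟩ := hx
  obtain ⟨hyK, hyC⟩ := hy
  obtain ⟨q⟩ := ConnectedComponent.eq.1 (hxC.trans hyC.symm)
  let r : G.Walk x y := q.map (Embedding.induce (G := G) Kᶜ).toHom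
  refine ⟨r.bypass, r.bypass_isPath, fun z hz => ?_⟩
  have hzr : z ∈ r.support := r.support_bypass_subset_support hz
  obtain ⟨a, -, rfl⟩ := List.mem_map.1 (Walk.support_map .. ▸ hzr)
  exact a.2

theorem eq_of_adj_of_mem_componentCompl (hG : G.IsTree) {K : Set V}
    {C : G.ComponentCompl K} {v u w : V} (hv : v ∈ K) (hu : G.Adj v u) (hw : G.Adj v w)
    (huC : u ∈ C) (hwC : w ∈ C) : u = w := by
  obtain ⟨p, hp, hpK⟩ := exists_isPath_of_mem_componentCompl huC hwC
  have hvp : (Walk.cons hu p).IsPath := hp.cons fun h => hpK v h hv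
  have heq := congrArg Walk.support ((hG.existsUnique_path v w).unique hvp (.of_adj hw))
  have hup : u ∈ p.support := p.start_mem_support
  simp_all [Adj.toWalk]

/-- The component of the complement of the finite set `K` that contains the end `p`. -/
def endComp (p : G.end) (K : Finset V) : G.ComponentCompl (K : Set V) := p.val (op K)

theorem exists_mem_endComp (p : G.end) (K : Finset V) : ∃ y, y ∈ endComp p K :=
  (endComp p K).nonempty

theorem mem_endComp_of_subset {p : G.end} {K L : Finset V} (h : K ⊆ L) {y : V}
    (hy : y ∈ endComp p L) : y ∈ endComp p K := by
  obtain ⟨hyL, hyC⟩ := hy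
  exact ⟨_, (G.end_hom_mk_of_mk p.2 (CategoryTheory.opHomOfLE h) hyL hyC.symm).symm⟩

theorem exists_eventually_mem_componentCompl {r : ℕ → V} (hadj : ∀ n, G.Adj (r n) (r (n + 1)))
    (hinj : Injective r) (K : Finset V) :
    ∃ C : G.ComponentCompl (K : Set V), ∀ᶠ n in atTop, r n ∈ C := by
  have hr : Tendsto r atTop cofinite := Nat.cofinite_eq_atTop ▸ hinj.tendsto_cofinite
  obtain ⟨N, hN⟩ := eventually_atTop.1 (hr K.finite_toSet.compl_mem_cofinite)
  refine ⟨G.componentComplMk (hN N le_rfl), eventually_atTop.2 ⟨N, fun n hn => ?_⟩⟩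
  induction n, hn using Nat.le_induction with
  | base => exact componentComplMk_mem _ _
  | succ n hn ih => exact ComponentCompl.mem_of_adj _ _ ih (hN _ (by omega)) (hadj n)

theorem exists_end_of_injective {r : ℕ → V} (hadj : ∀ n, G.Adj (r n) (r (n + 1)))
    (hinj : Injective r) : ∃ p : G.end, ∀ K, ∀ᶠ n in atTop, r n ∈ endComp p K := by
  choose C hC using exists_eventually_mem_componentCompl hadj hinj
  refine ⟨⟨fun K => C K.unop, fun {L K} f => ?_⟩, hC⟩
  obtain ⟨n, hL, hK⟩ := ((hC L.unop).and (hC K.unop)).exists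
  exact componentCompl_eq_of_mem
    (ComponentCompl.subset_hom _ (CategoryTheory.le_of_op_hom f) hL) hK

end Ends

section BackwardOrbit

variable {α : Type*} {f : α → α}

theorem exists_backward_orbit {P : α → Prop} (h : ∀ x, P x → ∃ y, f y = x ∧ P y) {x : α}
    (hx : P x) : ∃ r : ℕ → α, r 0 = x ∧ (∀ n, f (r (n + 1)) = r n) ∧ ∀ n, P (r n) := by
  choose! g hg hgP using h
  have hP : ∀ n, P (g^[n] x) := Nat.rec hx fun n ih => by
    rw [iterate_succ_apply']; exact hgP _ ih
  refine ⟨fun n => g^[n] x, rfl, fun n => ?_, hP⟩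
  simp only [iterate_succ_apply', hg _ (hP n)]

theorem iterate_backward_orbit {r : ℕ → α} (hr : ∀ n, f (r (n + 1)) = r n) (m n : ℕ) :
    f^[m] (r (n + m)) = r n := by
  induction m with
  | zero => rfl
  | succ m ih => rw [iterate_succ_apply, ← Nat.add_assoc, hr, ih]

end BackwardOrbit

namespace TreeDyn

variable {V : Type} (T : TreeDyn V) (ω : T.G.end)

theorem exists_adj_mem_endComp (v : V) : ∃ u, T.G.Adj v u ∧ u ∈ endComp ω {v} := by
  obtain ⟨⟨c, k⟩, hc, hk, hck⟩ := ComponentCompl.exists_adj_boundary_pair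
    T.isTree.connected.preconnected (by simp) (endComp ω {v})
  obtain rfl : k = v := by simpa using hk
  exact ⟨c, hck.symm, hc⟩

/-- The neighbour of `v` in the direction of the end `ω`. For `ω = ∞` this orients the tree:
every edge joins a vertex to its parent, and rays to `∞` are orbits of the parent map. -/
noncomputable def parent (v : V) : V := (T.exists_adj_mem_endComp ω v).choose

theorem adj_parent (v : V) : T.G.Adj v (T.parent ω v) :=
  (T.exists_adj_mem_endComp ω v).choose_spec.1

theorem parent_mem_endComp (v : V) : T.parent ω v ∈ endComp ω {v} :=
  (T.exists_adj_mem_endComp ω v).choose_spec.2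

variable {T ω}

theorem eq_parent_of_mem_endComp {v u : V} (h : T.G.Adj v u) (hu : u ∈ endComp ω {v}) :
    u = T.parent ω v :=
  eq_of_adj_of_mem_componentCompl T.isTree (by simp) h (T.adj_parent ω v) hu
    (T.parent_mem_endComp ω v)

theorem parent_parent_ne (v : V) : T.parent ω (T.parent ω v) ≠ v := by
  classical
  intro h
  set u := T.parent ω v with hu
  obtain ⟨x, hx⟩ := exists_mem_endComp ω {u, v}
  have hxv : x ∈ endComp ω {v} := mem_endComp_of_subset (by simp) hx
  have hxu : x ∈ endComp ω {u} := mem_endComp_of_subset (by simp) hx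
  obtain ⟨p, hp, hpv⟩ := exists_isPath_of_mem_componentCompl hxv (T.parent_mem_endComp ω v)
  obtain ⟨q, hq, hqu⟩ := exists_isPath_of_mem_componentCompl hxu (h ▸ T.parent_mem_endComp ω u)
  have hpq : (p.concat (T.adj_parent ω v).symm) = q :=
    (T.isTree.existsUnique_path x v).unique (hp.concat (fun h => hpv v h (by simp)) _) hq
  exact hqu u (hpq ▸ by simp [Walk.support_concat, hu]) (by simp)

theorem eq_parent_or_eq_parent (ω : T.G.end) {v w : V} (h : T.G.Adj v w) :
    w = T.parent ω v ∨ v = T.parent ω w := by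
  classical
  obtain ⟨x, hx⟩ := exists_mem_endComp ω {v, w}
  have hxv : x ∈ endComp ω {v} := mem_endComp_of_subset (by simp) hx
  have hxw : x ∈ endComp ω {w} := mem_endComp_of_subset (by simp) hx
  obtain ⟨p, hp, -⟩ := T.isTree.existsUnique_path x v
  by_cases hw : w ∈ p.support
  · refine .inl (eq_parent_of_mem_endComp h
      (mem_componentCompl_of_walk (p.takeUntil w hw) (fun z hz hzv => ?_) hxv))
    obtain rfl : z = v := by simpa using hzv
    exact p.endpoint_notMem_support_takeUntil hp hw h.ne hz
  · refine .inr (eq_parent_of_mem_endComp h.symm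
      (mem_componentCompl_of_walk p (fun z hz hzw => ?_) hxw))
    obtain rfl : z = w := by simpa using hzw
    exact hw hz

theorem adj_iff (ω : T.G.end) {v w : V} :
    T.G.Adj v w ↔ w = T.parent ω v ∨ T.parent ω w = v := by
  refine ⟨fun h => (eq_parent_or_eq_parent ω h).imp_right Eq.symm, ?_⟩
  rintro (rfl | rfl)
  exacts [T.adj_parent ω v, (T.adj_parent ω w).symm]

theorem iterate_parent_mem_iff {K : Set V} {C : T.G.ComponentCompl K} {x : V} {n : ℕ}
    (h : ∀ i ≤ n, (T.parent ω)^[i] x ∉ K) : (T.parent ω)^[n] x ∈ C ↔ x ∈ C := by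
  induction n with
  | zero => rfl
  | succ n ih =>
    have hn := h n (by omega)
    have hn' := h (n + 1) le_rfl
    rw [← ih fun i hi => h i (by omega)]
    rw [iterate_succ_apply'] at hn' ⊢
    exact ⟨fun hC => ComponentCompl.mem_of_adj _ _ hC hn (T.adj_parent ω _).symm,
      fun hC => ComponentCompl.mem_of_adj _ _ hC hn' (T.adj_parent ω _)⟩

theorem parent_mem_endComp_of_mem {v x : V} (hx : x ∈ endComp ω {v}) :
    T.parent ω x ∈ endComp ω {v} := by
  refine ComponentCompl.mem_of_adj x _ hx (fun h => ?_) (T.adj_parent ω x)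
  obtain rfl : T.parent ω x = v := by simpa using h
  exact parent_parent_ne x (eq_parent_of_mem_endComp (T.adj_parent ω x).symm hx).symm

theorem iterate_parent_mem_endComp {v x : V} (hx : x ∈ endComp ω {v}) (n : ℕ) :
    (T.parent ω)^[n] x ∈ endComp ω {v} :=
  Nat.rec hx (fun n ih => iterate_succ_apply' (T.parent ω) n x ▸ parent_mem_endComp_of_mem ih) n

theorem iterate_parent_ne {v x : V} (hx : x ∈ endComp ω {v}) (n : ℕ) :
    (T.parent ω)^[n] x ≠ v := fun h =>
  ComponentCompl.notMem_of_mem (iterate_parent_mem_endComp hx n) (by simp [h])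

theorem iterate_parent_injective (ω : T.G.end) (v : V) :
    Injective fun n => (T.parent ω)^[n] v := by
  intro m n h
  wlog hmn : m < n generalizing m n
  · rcases (not_lt.1 hmn).eq_or_lt with h' | h'
    exacts [h'.symm, (this h.symm h').symm]
  obtain ⟨k, rfl⟩ : ∃ k, n = k + (m + 1) := ⟨n - (m + 1), by omega⟩
  simp only [iterate_add_apply _ k, iterate_succ_apply' _ m] at h
  exact absurd h.symm (iterate_parent_ne (T.parent_mem_endComp ω _) k)

theorem exists_iterate_parent_eq (ω : T.G.end) (v w : V) :
    ∃ m n, (T.parent ω)^[m] v = (T.parent ω)^[n] w := by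
  obtain ⟨p⟩ := T.isTree.connected.preconnected v w
  induction p with
  | nil => exact ⟨0, 0, rfl⟩
  | cons h _ ih =>
    obtain ⟨m, n, e⟩ := ih
    rcases eq_parent_or_eq_parent ω h with rfl | rfl
    · exact ⟨m + 1, n, e⟩
    · exact ⟨m, n + 1, by
        rw [iterate_succ_apply', ← e, ← iterate_succ_apply' (T.parent ω), iterate_succ_apply]⟩

theorem mem_endComp_singleton_iff {v x : V} :
    x ∈ endComp ω {v} ↔ ∀ n, (T.parent ω)^[n] x ≠ v := by
  refine ⟨iterate_parent_ne, fun h => ?_⟩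
  obtain ⟨m, _ | n, hmn⟩ := exists_iterate_parent_eq ω x v
  · exact absurd hmn (h m)
  · rw [← iterate_parent_mem_iff (n := m) fun i _ => by simpa using h i, hmn]
    exact iterate_parent_mem_endComp (T.parent_mem_endComp ω v) n

theorem below_iff_notMem_endComp {v x : V} : T.Below ω v x ↔ x ∉ endComp ω {v} := by
  by_cases hx : x = v
  · subst hx
    exact iff_of_true (.inl rfl) fun h => iterate_parent_ne h 0 rfl
  · have hx' : x ∉ (({v} : Finset V) : Set V) := by simpa using hx
    exact ⟨fun h hC => (h.resolve_left hx).elim fun _ hne => hne hC.choose_spec,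
      fun h => .inr ⟨hx', fun heq => h ⟨hx', heq⟩⟩⟩

theorem below_iff_exists_iterate {v x : V} : T.Below ω v x ↔ ∃ n, (T.parent ω)^[n] x = v := by
  rw [below_iff_notMem_endComp, mem_endComp_singleton_iff, not_forall_not]

namespace Below

theorem refl (ω : T.G.end) (v : V) : T.Below ω v v := .inl rfl

theorem iterate_parent (ω : T.G.end) (v : V) (n : ℕ) : T.Below ω ((T.parent ω)^[n] v) v :=
  below_iff_exists_iterate.2 ⟨n, rfl⟩

theorem trans {u v x : V} (h : T.Below ω u v) (h' : T.Below ω v x) : T.Below ω u x := by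
  obtain ⟨n, rfl⟩ := below_iff_exists_iterate.1 h
  obtain ⟨m, rfl⟩ := below_iff_exists_iterate.1 h'
  exact below_iff_exists_iterate.2 ⟨n + m, iterate_add_apply ..⟩

theorem total {v w x : V} (hv : T.Below ω v x) (hw : T.Below ω w x) :
    T.Below ω v w ∨ T.Below ω w v := by
  obtain ⟨m, rfl⟩ := below_iff_exists_iterate.1 hv
  obtain ⟨n, rfl⟩ := below_iff_exists_iterate.1 hw
  wlog h : m ≤ n generalizing m n
  · exact (this n hw m hv (by omega)).symm
  obtain ⟨k, rfl⟩ := Nat.exists_eq_add_of_le h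
  rw [Nat.add_comm m, iterate_add_apply]
  exact .inr (iterate_parent ω _ k)

theorem exists_parent_eq {v x : V} (h : T.Below ω v x) (hne : x ≠ v) :
    ∃ c, T.parent ω c = v ∧ T.Below ω c x := by
  obtain ⟨_ | n, rfl⟩ := below_iff_exists_iterate.1 h
  · exact absurd rfl hne
  · exact ⟨_, (iterate_succ_apply' ..).symm, iterate_parent ω x n⟩

end Below

theorem finite_setOf_parent_eq (ω : T.G.end) (v : V) : {c | T.parent ω c = v}.Finite :=
  (T.locFin v).subset fun _ hc => (adj_iff ω).2 (.inr hc)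

theorem finite_setOf_iterate_parent_eq (ω : T.G.end) (n : ℕ) (v : V) :
    {y | (T.parent ω)^[n] y = v}.Finite := by
  induction n generalizing v with
  | zero => exact Set.finite_singleton v
  | succ n ih =>
    refine ((finite_setOf_parent_eq ω v).biUnion fun c _ => ih c).subset fun y hy => ?_
    exact Set.mem_biUnion ((iterate_succ_apply' ..).symm.trans hy) rfl

variable (T ω) in
/-- The vertices `n` levels below `v`. -/
noncomputable def descendants (n : ℕ) (v : V) : Finset V :=
  (finite_setOf_iterate_parent_eq ω n v).toFinset

@[simp]
theorem mem_descendants {n : ℕ} {v y : V} :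
    y ∈ T.descendants ω n v ↔ (T.parent ω)^[n] y = v := by
  simp [descendants]

variable (T ω) in
/-- The neighbours of `v` other than its parent. -/
noncomputable def children (v : V) : Finset V := (finite_setOf_parent_eq ω v).toFinset

@[simp]
theorem mem_children {v c : V} : c ∈ T.children ω v ↔ T.parent ω c = v := by
  simp [children]

theorem ncard_neighborSet (ω : T.G.end) (v : V) :
    (T.G.neighborSet v).ncard = (T.children ω v).card + 1 := by
  classical
  have hv : T.parent ω v ∉ T.children ω v := fun h => parent_parent_ne v (mem_children.1 h)
  rw [← Finset.card_insert_of_notMem hv, ← Set.ncard_coe_finset]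
  congr 1
  ext w
  simp [adj_iff ω]

theorem parent_surjective (h : ∀ v, (T.G.neighborSet v).ncard ≠ 1) :
    Surjective (T.parent ω) := fun v => by
  have hv : (T.children ω v).Nonempty := by
    rw [← Finset.card_ne_zero]
    simpa [ncard_neighborSet ω] using h v
  simpa using hv.exists_mem

end TreeDyn

theorem isOpen_endTop_setOf_endComp_mem {V : Type} (G : SimpleGraph V) (K : Finset V)
    (s : Set (G.ComponentCompl (K : Set V))) : IsOpen[endTop G] {p | endComp p K ∈ s} :=
  ⟨_, iInf_le (fun L : (Finset V)ᵒᵖ => TopologicalSpace.induced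
    (fun f : ∀ L, G.componentComplFunctor.obj L => f L) ⊥) (op K) _ ⟨s, trivial, rfl⟩, rfl⟩

namespace TreeDyn

variable {V : Type} {T : TreeDyn V} {ω : T.G.end}

theorem eventually_iterate_parent_ne (ω : T.G.end) (v k : V) :
    ∀ᶠ n in atTop, (T.parent ω)^[n] k ≠ v :=
  (Nat.cofinite_eq_atTop ▸ (iterate_parent_injective ω k).tendsto_cofinite).eventually
    (Set.finite_singleton v).compl_mem_cofinite

theorem eventually_forall_not_below (ω : T.G.end) (v : V) (K : Finset V) :
    ∀ᶠ n in atTop, ∀ k ∈ K, ∀ c, (T.parent ω)^[n] c = v → ¬ T.Below ω c k := by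
  refine K.eventually_all.2 fun k _ => ?_
  filter_upwards [eventually_forall_ge_atTop.2 (eventually_iterate_parent_ne ω v k)]
  rintro n hn c hc hck
  obtain ⟨i, rfl⟩ := below_iff_exists_iterate.1 hck
  exact hn (n + i) (by omega) (iterate_add_apply .. ▸ hc)

theorem eventually_forall_below (ω : T.G.end) (v : V) (K : Finset V) :
    ∀ᶠ n in atTop, ∀ k ∈ K, T.Below ω ((T.parent ω)^[n] v) k := by
  refine K.eventually_all.2 fun k _ => ?_
  obtain ⟨a, b, hab⟩ := exists_iterate_parent_eq ω k v
  filter_upwards [eventually_ge_atTop b] with n hn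
  obtain ⟨i, rfl⟩ := Nat.exists_eq_add_of_le' hn
  rw [iterate_add_apply, ← hab, ← iterate_add_apply]
  exact .iterate_parent ω k _

section EndBelow

variable {p : T.G.end}

theorem endBelow_iff_below {v y : V} {K : Finset V} (hv : v ∈ K) (hy : y ∈ endComp p K) :
    T.EndBelow ω v p ↔ T.Below ω v y := by
  have hyv : y ∈ endComp p {v} := mem_endComp_of_subset (by simpa using hv) hy
  rw [below_iff_notMem_endComp]
  refine ⟨fun h hC => h (componentCompl_eq_of_mem hyv hC), fun h heq => h ?_⟩
  rwa [show endComp ω {v} = endComp p {v} from heq.symm]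

theorem mem_endComp_of_not_below {K : Finset V} {u y : V} (hK : ∀ k ∈ K, T.Below ω u k)
    (hy : ¬ T.Below ω u y) : y ∈ endComp ω K := by
  classical
  have hmem {x : V} (n : ℕ) (hx : ¬ T.Below ω u x) :
      (T.parent ω)^[n] x ∈ endComp ω K ↔ x ∈ endComp ω K :=
    iterate_parent_mem_iff fun i _ hi => hx ((hK _ hi).trans (.iterate_parent ω x i))
  obtain ⟨z, hz⟩ := exists_mem_endComp ω (insert u K)
  have hzu : ¬ T.Below ω u z := fun h => (endBelow_iff_below (by simp) hz).2 h rfl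
  obtain ⟨m, n, hmn⟩ := exists_iterate_parent_eq ω y z
  rw [← hmem m hy, hmn, hmem n hzu]
  exact mem_endComp_of_subset (Finset.subset_insert u K) hz

theorem exists_endBelow_iterate_parent_of_ne (hp : p ≠ ω) (v : V) :
    ∃ n, T.EndBelow ω ((T.parent ω)^[n] v) p := by
  classical
  by_contra! hcon
  refine hp (Subtype.ext (funext fun K => ?_))
  obtain ⟨n, hn⟩ := (eventually_forall_below ω v K.unop).exists
  obtain ⟨y, hy⟩ := exists_mem_endComp p (insert ((T.parent ω)^[n] v) K.unop)
  have hyn := (endBelow_iff_below (by simp) hy).not.1 (hcon n)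
  exact componentCompl_eq_of_mem (mem_endComp_of_subset (Finset.subset_insert _ _) hy)
    (mem_endComp_of_not_below hn hyn)

theorem exists_endBelow_of_ray {r : ℕ → V} (hr : ∀ n, T.parent ω (r (n + 1)) = r n) :
    ∃ p : T.G.end, ∀ n, T.EndBelow ω (r n) p := by
  have hit := iterate_backward_orbit hr
  have hinj : Injective r := fun a b hab => by
    refine iterate_parent_injective ω (r a) (?_ : (T.parent ω)^[a] (r a) = (T.parent ω)^[b] (r a))
    simpa [← hab] using (hit a 0).trans (hit b 0).symm
  obtain ⟨p, hp⟩ := exists_end_of_injective (fun n => (adj_iff ω).2 (.inr (hr n))) hinj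
  refine ⟨p, fun n => ?_⟩
  obtain ⟨m, hm, hnm⟩ := ((hp {r n}).and (eventually_ge_atTop n)).exists
  obtain ⟨i, rfl⟩ := Nat.exists_eq_add_of_le hnm
  exact (endBelow_iff_below (by simp) hm).2 (below_iff_exists_iterate.2 ⟨i, hit i n⟩)

namespace EndBelow

variable {v w : V}

theorem ne_infty (h : T.EndBelow ω v p) : p ≠ ω := by
  rintro rfl
  exact h rfl

theorem of_below (h : T.EndBelow ω v p) (hw : T.Below ω w v) : T.EndBelow ω w p := by
  classical
  obtain ⟨y, hy⟩ := exists_mem_endComp p {v, w}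
  exact (endBelow_iff_below (by simp) hy).2 (hw.trans ((endBelow_iff_below (by simp) hy).1 h))

theorem total (hv : T.EndBelow ω v p) (hw : T.EndBelow ω w p) :
    T.Below ω v w ∨ T.Below ω w v := by
  classical
  obtain ⟨y, hy⟩ := exists_mem_endComp p {v, w}
  exact ((endBelow_iff_below (by simp) hy).1 hv).total ((endBelow_iff_below (by simp) hy).1 hw)

theorem exists_parent_eq (h : T.EndBelow ω v p) : ∃ c, T.parent ω c = v ∧ T.EndBelow ω c p := by
  classical
  obtain ⟨y, hy⟩ := exists_mem_endComp p (insert v (T.children ω v))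
  have hne : y ≠ v := by
    rintro rfl
    exact ComponentCompl.notMem_of_mem hy (by simp)
  obtain ⟨c, hc, hcy⟩ := ((endBelow_iff_below (by simp) hy).1 h).exists_parent_eq hne
  exact ⟨c, hc, (endBelow_iff_below (by simp [hc]) hy).2 hcy⟩

theorem exists_ray (h : T.EndBelow ω v p) : ∃ r : ℕ → V, r 0 = v ∧
    (∀ n, T.parent ω (r (n + 1)) = r n) ∧ ∀ n, T.EndBelow ω (r n) p :=
  exists_backward_orbit (fun _ hx => exists_parent_eq hx) h

theorem exists_iterate_parent_eq (h : T.EndBelow ω v p) (n : ℕ) :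
    ∃ c, (T.parent ω)^[n] c = v ∧ T.EndBelow ω c p := by
  obtain ⟨r, rfl, hr, hrp⟩ := h.exists_ray
  exact ⟨r n, by simpa using iterate_backward_orbit hr n 0, hrp n⟩

-- The vertices above `p` form a chain, along which a map commuting with `parent` is injective.
theorem eq_of_commute (hv : T.EndBelow ω v p) (hw : T.EndBelow ω w p) {g : V → V}
    (hg : Function.Commute g (T.parent ω)) (h : g v = g w) : v = w := by
  wlog hvw : T.Below ω v w generalizing v w
  · exact (this hw hv h.symm ((hv.total hw).resolve_left hvw)).symm
  obtain ⟨k, rfl⟩ := below_iff_exists_iterate.1 hvw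
  obtain rfl : k = 0 := iterate_parent_injective ω (g w) (((hg.iterate_right k).eq w).symm.trans h)
  rfl

theorem mem_endComp (h : T.EndBelow ω v p) {K : Finset V} (hK : ∀ k ∈ K, ¬ T.Below ω v k) :
    v ∈ endComp p K := by
  classical
  obtain ⟨y, hy⟩ := exists_mem_endComp p (insert v K)
  obtain ⟨n, rfl⟩ := below_iff_exists_iterate.1 ((endBelow_iff_below (by simp) hy).1 h)
  refine (iterate_parent_mem_iff fun i hi hiK => hK _ hiK ?_).2
    (mem_endComp_of_subset (Finset.subset_insert _ K) hy)
  exact below_iff_exists_iterate.2 ⟨n - i, by rw [← iterate_add_apply, Nat.sub_add_cancel hi]⟩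

end EndBelow

theorem exists_endBelow (h : ∀ v, (T.G.neighborSet v).ncard ≠ 1) (v : V) :
    ∃ p : T.G.end, T.EndBelow ω v p := by
  obtain ⟨r, rfl, hr, -⟩ := exists_backward_orbit (P := fun _ => True) (x := v)
    (fun x _ => (parent_surjective (ω := ω) h x).imp fun _ hc => ⟨hc, trivial⟩) trivial
  obtain ⟨p, hp⟩ := exists_endBelow_of_ray hr
  exact ⟨p, hp 0⟩

theorem exists_isIsolatedEnd_endBelow (h : ∀ v, (T.G.neighborSet v).ncard ≠ 1) {c : V}
    (hc : ∀ n, (T.descendants ω n c : Set V).Subsingleton) :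
    ∃ p, T.EndBelow ω c p ∧ IsIsolatedEnd T.G p := by
  obtain ⟨p, hp⟩ := exists_endBelow h c
  have hsing : {p} = {q | endComp q {c} ∈ ({endComp ω {c}}ᶜ : Set _)} := by
    refine Set.ext fun q => ⟨fun hq => hq ▸ hp, fun hq => Subtype.ext (funext fun K => ?_)⟩
    obtain ⟨n, hn⟩ := (eventually_forall_not_below ω c K.unop).exists
    obtain ⟨a, ha, hap⟩ := hp.exists_iterate_parent_eq n
    obtain ⟨b, hb, hbq⟩ := EndBelow.exists_iterate_parent_eq hq n
    obtain rfl : a = b := hc n (by simpa) (by simpa)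
    exact componentCompl_eq_of_mem (hbq.mem_endComp fun k hk => hn k hk _ ha)
      (hap.mem_endComp fun k hk => hn k hk _ ha)
  refine ⟨p, hp, ?_⟩
  rw [IsIsolatedEnd, hsing]
  exact isOpen_endTop_setOf_endComp_mem T.G {c} _

end EndBelow

end TreeDyn

/-! ### The topology of the Julia set -/

namespace TreeDyn

variable {V : Type} {T : TreeDyn V} {ω : T.G.end}

noncomputable instance : TopologicalSpace (JSet T ω) := JTop T ω

noncomputable instance : MeasurableSpace (JSet T ω) := JBorel T ω

instance : BorelSpace (JSet T ω) := ⟨rfl⟩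

theorem isOpen_setOf_endComp_mem (K : Finset V) (s : Set (T.G.ComponentCompl (K : Set V))) :
    IsOpen {p : JSet T ω | endComp p.val K ∈ s} :=
  ⟨_, isOpen_endTop_setOf_endComp_mem T.G K s, rfl⟩

theorem nhds_eq_iInf (p : JSet T ω) :
    𝓝 p = ⨅ K : (Finset V)ᵒᵖ, 𝓟 {q : JSet T ω | q.val.val K = p.val.val K} := by
  let (K : (Finset V)ᵒᵖ) : TopologicalSpace (T.G.componentComplFunctor.obj K) := ⊥
  have (K : (Finset V)ᵒᵖ) : DiscreteTopology (T.G.componentComplFunctor.obj K) := ⟨rfl⟩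
  have hind : IsInducing fun q : JSet T ω => q.val.val := ⟨induced_compose⟩
  simp only [hind.nhds_eq_comap, nhds_pi, Filter.pi, comap_iInf, nhds_discrete,
    comap_pure, comap_principal]
  rfl

instance : T2Space (JSet T ω) := by
  refine ⟨fun p q hpq => ?_⟩
  obtain ⟨K, hK⟩ : ∃ K, p.val.val K ≠ q.val.val K := by
    by_contra! h
    exact hpq (Subtype.ext (Subtype.ext (funext h)))
  refine ⟨_, _, isOpen_setOf_endComp_mem K.unop {endComp p.val K.unop},
    isOpen_setOf_endComp_mem K.unop {endComp q.val K.unop}, rfl, rfl,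
    Set.disjoint_left.2 fun x hxp hxq => hK (Eq.trans (Eq.symm hxp) hxq)⟩

variable (T ω) in
/-- The set `J(F, v)` of the ends in `J(F)` that lie below `v`. -/
def cylinder (v : V) : Set (JSet T ω) := {p | T.EndBelow ω v p.val}

theorem isClopen_cylinder (v : V) : IsClopen (T.cylinder ω v) :=
  ⟨⟨by
    have h := isOpen_setOf_endComp_mem (ω := ω) {v} {endComp ω {v}}
    convert h using 1
    exact Set.ext fun p => not_not⟩,
   isOpen_setOf_endComp_mem {v} {endComp ω {v}}ᶜ⟩

theorem cylinder_subset_of_below {v w : V} (h : T.Below ω w v) :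
    T.cylinder ω v ⊆ T.cylinder ω w := fun _ hp => EndBelow.of_below hp h

theorem disjoint_cylinder {g : V → V} (hg : Function.Commute g (T.parent ω)) {v w : V}
    (h : g v = g w) (hne : v ≠ w) : Disjoint (T.cylinder ω v) (T.cylinder ω w) :=
  Set.disjoint_left.2 fun _ hv hw => hne (EndBelow.eq_of_commute hv hw hg h)

theorem tendsto_cylinder_smallSets {r : ℕ → V} (hr : ∀ n, T.parent ω (r (n + 1)) = r n)
    {p : JSet T ω} (hp : ∀ n, p ∈ T.cylinder ω (r n)) :
    Tendsto (fun n => T.cylinder ω (r n)) atTop (𝓝 p).smallSets := by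
  simp only [nhds_eq_iInf, smallSets_iInf, tendsto_iInf, smallSets_principal, tendsto_principal]
  intro K
  filter_upwards [eventually_forall_not_below ω (r 0) K.unop] with n hn q hq
  have hrn : ∀ k ∈ K.unop, ¬ T.Below ω (r n) k := fun k hk =>
    hn k hk _ (by simpa using iterate_backward_orbit hr n 0)
  exact componentCompl_eq_of_mem (EndBelow.mem_endComp hq hrn) (EndBelow.mem_endComp (hp n) hrn)

theorem exists_ray (p : JSet T ω) :
    ∃ r : ℕ → V, (∀ n, T.parent ω (r (n + 1)) = r n) ∧ ∀ n, p ∈ T.cylinder ω (r n) := by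
  obtain ⟨v⟩ := T.isTree.connected.nonempty
  obtain ⟨n, hn⟩ := exists_endBelow_iterate_parent_of_ne p.2 v
  obtain ⟨r, -, hr⟩ := hn.exists_ray
  exact ⟨r, hr⟩

theorem isTopologicalBasis_cylinder :
    TopologicalSpace.IsTopologicalBasis (Set.range (T.cylinder ω)) := by
  refine TopologicalSpace.isTopologicalBasis_of_isOpen_of_nhds ?_ fun p U hpU hU => ?_
  · rintro _ ⟨v, rfl⟩
    exact (isClopen_cylinder v).isOpen
  · obtain ⟨r, hr, hp⟩ := exists_ray p
    obtain ⟨n, hn⟩ := (tendsto_smallSets_iff.1 (tendsto_cylinder_smallSets hr hp) U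
      (hU.mem_nhds hpU)).exists
    exact ⟨_, ⟨r n, rfl⟩, hp n, hn⟩

theorem isCompact_cylinder (v : V) : IsCompact (T.cylinder ω v) := by
  refine isCompact_iff_ultrafilter_le_nhds.2 fun 𝒰 h𝒰 => ?_
  have hchild (x : V) (hx : T.cylinder ω x ∈ 𝒰) :
      ∃ c, T.parent ω c = x ∧ T.cylinder ω c ∈ 𝒰 := by
    refine (Ultrafilter.finite_biUnion_mem_iff (finite_setOf_parent_eq ω x)).1
      (mem_of_superset hx fun p hp => ?_)
    obtain ⟨c, hc, hcp⟩ := EndBelow.exists_parent_eq hp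
    exact Set.mem_biUnion hc hcp
  obtain ⟨r, rfl, hr, hr𝒰⟩ := exists_backward_orbit hchild (le_principal_iff.1 h𝒰)
  obtain ⟨p, hp⟩ := exists_endBelow_of_ray hr
  refine ⟨⟨p, (hp 0).ne_infty⟩, hp 0, fun U hU => ?_⟩
  obtain ⟨n, hn⟩ := (tendsto_smallSets_iff.1 (tendsto_cylinder_smallSets hr hp) U hU).exists
  exact mem_of_superset (hr𝒰 n) hn

theorem countable_vertices (ω : T.G.end) : Countable V := by
  obtain ⟨v⟩ := T.isTree.connected.nonempty
  refine Set.countable_univ_iff.1 ((Set.countable_iUnion fun m => Set.countable_iUnion fun n =>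
    (T.descendants ω n ((T.parent ω)^[m] v)).countable_toSet).mono fun x _ => ?_)
  obtain ⟨n, m, h⟩ := exists_iterate_parent_eq ω x v
  exact Set.mem_iUnion₂.2 ⟨m, n, by simpa using h⟩

instance : SecondCountableTopology (JSet T ω) :=
  have := countable_vertices ω
  isTopologicalBasis_cylinder.secondCountableTopology (Set.countable_range _)

variable {v₀ v : V}

theorem not_below_iterate_parent (v : V) (n : ℕ) : ¬ T.Below ω v ((T.parent ω)^[n + 1] v) := by
  rw [below_iff_notMem_endComp, not_not, iterate_succ_apply]
  exact iterate_parent_mem_endComp (T.parent_mem_endComp ω v) n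

namespace IsBase

theorem one_lt_card_children (hbase : T.IsBase ω v₀) : 1 < (T.children ω v₀).card := by
  have := hbase.1
  rw [ncard_neighborSet ω] at this
  omega

theorem children_parent (hbase : T.IsBase ω v₀) (hv : T.Below ω v v₀) :
    T.children ω (T.parent ω v) = {v} := by
  have hcard : (T.children ω (T.parent ω v)).card ≤ 1 := by
    by_contra! h
    obtain ⟨n, rfl⟩ := below_iff_exists_iterate.1 hv
    rw [← iterate_succ_apply' (T.parent ω)] at h
    refine not_below_iterate_parent v₀ n (hbase.2 _ ?_)
    rw [ncard_neighborSet ω]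
    exact Nat.succ_le_succ h
  exact Finset.eq_singleton_iff_unique_mem.2
    ⟨by simp, fun c hc => Finset.card_le_one.1 hcard c hc v (by simp)⟩

theorem eq_of_parent_eq (hbase : T.IsBase ω v₀) (hv : T.Below ω v v₀) {a : V}
    (ha : T.parent ω a = T.parent ω v) : a = v :=
  Finset.mem_singleton.1 (hbase.children_parent hv ▸ mem_children.2 ha)

theorem eq_of_iterate_parent_eq (hbase : T.IsBase ω v₀) (hv : T.Below ω v v₀) {a : V} {j : ℕ}
    (ha : (T.parent ω)^[j] a = (T.parent ω)^[j] v) : a = v := by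
  induction j with
  | zero => exact ha
  | succ j ih =>
    simp only [iterate_succ_apply'] at ha
    exact ih (hbase.eq_of_parent_eq ((Below.iterate_parent ω v j).trans hv) ha)

theorem below_or_below (hbase : T.IsBase ω v₀) (v : V) : T.Below ω v v₀ ∨ T.Below ω v₀ v := by
  obtain ⟨m, n, hmn⟩ := exists_iterate_parent_eq ω v v₀
  simp only [below_iff_exists_iterate]
  rcases le_total m n with h | h
  · obtain ⟨k, rfl⟩ := Nat.exists_eq_add_of_le h
    rw [iterate_add_apply] at hmn
    exact .inl ⟨k, (hbase.eq_of_iterate_parent_eq (.iterate_parent ω v₀ k) hmn).symm⟩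
  · obtain ⟨k, rfl⟩ := Nat.exists_eq_add_of_le h
    rw [iterate_add_apply] at hmn
    exact .inr ⟨k, hbase.eq_of_iterate_parent_eq (.refl ω v₀) hmn⟩

theorem cylinder_eq_univ (hbase : T.IsBase ω v₀) (hv : T.Below ω v v₀) :
    T.cylinder ω v = Set.univ := by
  refine Set.eq_univ_of_forall fun p => ?_
  obtain ⟨n, hn⟩ := exists_endBelow_iterate_parent_of_ne p.2 v
  obtain ⟨c, hc, hcp⟩ := hn.exists_iterate_parent_eq n
  exact hbase.eq_of_iterate_parent_eq hv hc ▸ hcp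

end IsBase

end TreeDyn

/-! ### The covering commutes with the parent map -/

namespace TreeDyn

variable {V : Type} {T : TreeDyn V} {ω : T.G.end} {v₀ : V}

variable (T) in
/-- The preimages of `w` under the covering. -/
noncomputable def fiber (w : V) : Finset V := (T.finFibers w).toFinset

@[simp]
theorem mem_fiber {v w : V} : v ∈ T.fiber w ↔ T.F v = w := by simp [fiber]

theorem ncard_neighborSet_map_le (v : V) :
    (T.G.neighborSet (T.F v)).ncard ≤ (T.G.neighborSet v).ncard :=
  (Set.ncard_le_ncard (fun _ hw => T.edgeSurj hw) ((T.locFin v).image T.F)).trans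
    (Set.ncard_image_le (T.locFin v))

/-- A local degree function that need not satisfy the Riemann–Hurwitz inequality: `dV` and `dE` are
the multiplicities of the covering at vertices and edges. -/
structure IsCoveringDegree (T : TreeDyn V) (dV : V → ℕ) (dE : V → V → ℕ) : Prop where
  symm : ∀ v w, dE v w = dE w v
  pos : ∀ v, 0 < dV v
  eq_finsum : ∀ ⦃v w⦄, T.G.Adj v w → dV v = ∑ᶠ u ∈ {u | T.G.Adj v u ∧ T.F u = T.F w}, dE v u

namespace IsCoveringDegree

variable {dV : V → ℕ} {dE : V → V → ℕ} {Dg : ℕ}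

theorem sum_fiber (hdeg : T.IsCoveringDegree dV dE) (hDg : T.IsGlobalDeg dE Dg) {w u : V}
    (h : T.G.Adj w u) : ∑ v ∈ T.fiber w, dV v = Dg := by
  rw [hDg h, ← finsum_mem_coe_finset]
  refine finsum_mem_congr (by ext; simp) fun v hv => ?_
  obtain rfl : T.F v = w := hv
  obtain ⟨b, hb, rfl⟩ := T.edgeSurj h
  exact hdeg.eq_finsum hb

theorem card_fiber_le (hdeg : T.IsCoveringDegree dV dE) (hDg : T.IsGlobalDeg dE Dg) {w u : V}
    (h : T.G.Adj w u) : (T.fiber w).card ≤ Dg := by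
  rw [← hdeg.sum_fiber hDg h, Finset.card_eq_sum_ones]
  exact Finset.sum_le_sum fun v _ => hdeg.pos v

end IsCoveringDegree

theorem map_parent_ne_iff {v : V} :
    T.F (T.parent ω v) ≠ T.parent ω (T.F v) ↔ T.F v = T.parent ω (T.F (T.parent ω v)) := by
  refine ⟨fun h => ?_, fun h h' => ?_⟩
  · exact (eq_parent_or_eq_parent ω (T.adjMap (T.adj_parent ω v))).resolve_left h
  · exact parent_parent_ne _ (h.trans (congrArg _ h')).symm

theorem exists_map_parent_ne {v : V} (h : T.F (T.parent ω v) ≠ T.parent ω (T.F v)) :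
    ∃ c, T.parent ω c = v ∧ T.F (T.parent ω c) ≠ T.parent ω (T.F c) := by
  obtain ⟨c, hvc, hc⟩ := T.edgeSurj (T.adj_parent ω (T.F v))
  rcases (adj_iff ω).1 hvc with rfl | rfl
  · exact absurd hc h
  · exact ⟨c, rfl, map_parent_ne_iff.2 hc⟩

theorem exists_parent_eq_of_map_parent_eq {v u : V} (h : T.F (T.parent ω v) = T.parent ω (T.F v))
    (hu : T.parent ω u = T.F v) : ∃ c, T.parent ω c = v ∧ T.F c = u := by
  obtain ⟨c, hvc, rfl⟩ := T.edgeSurj ((adj_iff ω).2 (.inr hu))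
  rcases (adj_iff ω).1 hvc with rfl | hc
  · exact absurd (h ▸ hu) (parent_parent_ne _)
  · exact ⟨c, hc, rfl⟩

theorem exists_iterate_parent_eq_of_map_parent_eq {v u : V} {n : ℕ}
    (h : T.F (T.parent ω v) = T.parent ω (T.F v)) (hu : (T.parent ω)^[n] u = T.F v) :
    ∃ c, (T.parent ω)^[n] c = v ∧ T.F c = u := by
  induction n generalizing v with
  | zero => exact ⟨v, rfl, hu.symm⟩
  | succ n ih =>
    rw [iterate_succ_apply'] at hu
    obtain ⟨d, rfl, hd⟩ := exists_parent_eq_of_map_parent_eq h hu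
    obtain ⟨c, rfl, hc⟩ := ih (by rw [hd, hu]) hd.symm
    exact ⟨c, iterate_succ_apply' .., hc⟩

-- A vertex mapped strictly above the base while no preimage of the base lies below it is mapped
-- with its descendants folded upwards onto the ray to `ω`.
theorem IsBase.map_eq_iterate_parent (hbase : T.IsBase ω v₀) {c y : V} {n : ℕ}
    (hc : T.Below ω (T.F c) (T.parent ω v₀)) (hv₀ : ∀ k, T.F k = v₀ → ¬ T.Below ω c k)
    (hy : (T.parent ω)^[n] y = c) : T.F y = (T.parent ω)^[n] (T.F c) := by
  induction n generalizing y with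
  | zero => exact congrArg T.F hy
  | succ n ih =>
    have hpy := ih hy
    rw [iterate_succ_apply', ← hpy, ← map_parent_ne_iff]
    intro h
    obtain ⟨i, hi⟩ := below_iff_exists_iterate.1
      ((Below.iterate_parent ω (T.F c) n).trans hc)
    rw [← hpy, h, ← iterate_succ_apply, iterate_succ_apply'] at hi
    have hFy : T.F y = (T.parent ω)^[i] v₀ :=
      hbase.eq_of_parent_eq (.iterate_parent ω v₀ i) hi.symm
    obtain ⟨k, rfl, hk⟩ := exists_iterate_parent_eq_of_map_parent_eq h hFy.symm
    exact hv₀ k hk (below_iff_exists_iterate.2 ⟨n + 1 + i, by rw [iterate_add_apply, hy]⟩)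

theorem exists_descendants_subsingleton (hval : ∀ v, (T.G.neighborSet v).ncard ≠ 1) {c : V} {N : ℕ}
    (hN : ∀ n, (T.descendants ω n c).card ≤ N) :
    ∃ y, ∀ n, (T.descendants ω n y : Set V).Subsingleton := by
  obtain ⟨n, hn⟩ : ∃ n, ∀ m, (T.descendants ω m c).card ≤ (T.descendants ω n c).card := by
    have hbdd : BddAbove (Set.range fun n => (T.descendants ω n c).card) :=
      ⟨N, Set.forall_mem_range.2 hN⟩
    obtain ⟨n, hn⟩ := Nat.sSup_mem (Set.range_nonempty _) hbdd
    exact ⟨n, fun m => (le_csSup hbdd ⟨m, rfl⟩).trans hn.ge⟩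
  have hsurj (k : ℕ) : Surjective (T.parent ω)^[k] := (parent_surjective hval).iterate k
  obtain ⟨y, hy⟩ := hsurj n c
  refine ⟨y, fun k a ha b hb => ?_⟩
  have hinj : Set.InjOn (T.parent ω)^[k] (T.descendants ω (n + k) c) := by
    refine Finset.injOn_of_surjOn_of_card_le _ (t := T.descendants ω n c)
      (fun x hx => ?_) (fun x hx => ?_) (hn _)
    · simpa [iterate_add_apply] using hx
    · obtain ⟨z, rfl⟩ := hsurj k x
      exact ⟨z, by simpa [iterate_add_apply] using hx, rfl⟩
  simp only [Finset.mem_coe, mem_descendants] at ha hb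
  exact hinj (by simp [iterate_add_apply, ha, hy]) (by simp [iterate_add_apply, hb, hy])
    (ha.trans hb.symm)

theorem IsCoveringDegree.commute_parent {dV : V → ℕ} {dE : V → V → ℕ} {Dg : ℕ}
    (hdeg : T.IsCoveringDegree dV dE) (hDg : T.IsGlobalDeg dE Dg) (hbase : T.IsBase ω v₀)
    (hiso : ∀ e, IsIsolatedEnd T.G e → e = ω) (hval : ∀ v, (T.G.neighborSet v).ncard ≠ 1) :
    Function.Commute T.F (T.parent ω) := by
  intro v
  by_contra hv
  obtain ⟨r, rfl, hr, hne⟩ := exists_backward_orbit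
    (P := fun v => T.F (T.parent ω v) ≠ T.parent ω (T.F v)) (fun _ => exists_map_parent_ne) hv
  have hFr (n : ℕ) : T.F (r n) = (T.parent ω)^[n] (T.F (r 0)) := by
    induction n with
    | zero => rfl
    | succ n ih => rw [map_parent_ne_iff.1 (hne _), hr, ih, iterate_succ_apply']
  obtain ⟨n, hbelow, hv₀⟩ := ((eventually_forall_below ω (T.F (r 0)) {T.parent ω v₀}).and
    (eventually_forall_not_below ω (r 0) (T.fiber v₀))).exists
  have hsub (m : ℕ) : T.descendants ω m (r n) ⊆ T.fiber ((T.parent ω)^[m] (T.F (r n))) := by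
    refine fun y hy => mem_fiber.2 (hbase.map_eq_iterate_parent ?_ (fun k hk => ?_)
      (mem_descendants.1 hy))
    · exact hFr n ▸ hbelow _ (Finset.mem_singleton_self _)
    · exact hv₀ k (mem_fiber.2 hk) (r n) (iterate_backward_orbit hr n 0 ▸ by simp)
  obtain ⟨y, hy⟩ := exists_descendants_subsingleton hval fun m =>
    (Finset.card_le_card (hsub m)).trans (hdeg.card_fiber_le hDg (T.adj_parent ω _))
  obtain ⟨p, hp, hpiso⟩ := exists_isIsolatedEnd_endBelow hval hy
  exact hp.ne_infty (hiso p hpiso)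

end TreeDyn

/-! ### Escape and the mass function -/

namespace TreeDyn

variable {V : Type} {T : TreeDyn V} {ω : T.G.end} {v₀ : V}

variable (T ω v₀) in
/-- The covering respects the direction of `ω` at every vertex and moves the base strictly
towards `ω`, so that every vertex escapes to `ω` under iteration. -/
structure IsEscaping : Prop where
  base : T.IsBase ω v₀
  commute : Function.Commute T.F (T.parent ω)
  map_base_below : T.Below ω (T.F v₀) (T.parent ω v₀)

theorem IsBase.map_base_ne (hbase : T.IsBase ω v₀) (hcomm : Function.Commute T.F (T.parent ω))
    (horb : ∀ v, ∃ w, T.GrandOrbit v w ∧ 3 ≤ (T.G.neighborSet w).ncard) : T.F v₀ ≠ v₀ := by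
  intro hfix
  obtain ⟨w, ⟨a, b, -, -, hab⟩, hw⟩ := horb (T.parent ω v₀)
  obtain ⟨i, hi⟩ := below_iff_exists_iterate.1 (hbase.2 w hw)
  refine not_below_iterate_parent (ω := ω) v₀ 0 (below_iff_exists_iterate.2 ⟨i, ?_⟩)
  calc (T.parent ω)^[i] (T.parent ω v₀)
    _ = (T.parent ω)^[i] (T.F^[a] (T.parent ω v₀)) := by
      rw [(hcomm.iterate_left a).eq, iterate_fixed hfix]
    _ = T.F^[b] ((T.parent ω)^[i] w) := by rw [hab, (hcomm.iterate_iterate b i).eq]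
    _ = v₀ := by rw [hi, iterate_fixed hfix]

theorem IsBase.isEscaping (hbase : T.IsBase ω v₀) (hcomm : Function.Commute T.F (T.parent ω))
    (horb : ∀ v, ∃ w, T.GrandOrbit v w ∧ 3 ≤ (T.G.neighborSet w).ncard) :
    T.IsEscaping ω v₀ := by
  refine ⟨hbase, hcomm, ?_⟩
  have hne := hbase.map_base_ne hcomm horb
  rcases hbase.below_or_below (T.F v₀) with h | h
  · obtain ⟨_ | k, hk⟩ := below_iff_exists_iterate.1 h
    · exact absurd hk.symm hne
    · exact below_iff_exists_iterate.2 ⟨k, hk⟩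
  · exfalso
    obtain ⟨j, hj⟩ := below_iff_exists_iterate.1 h
    rw [← (hcomm.iterate_right j).eq] at hj
    have hval := ncard_neighborSet_map_le (T := T) ((T.parent ω)^[j] v₀)
    rw [hj] at hval
    have hbelow : T.Below ω v₀ ((T.parent ω)^[j] v₀) := hbase.2 _ (hbase.1.trans hval)
    cases j with
    | zero => exact hne hj
    | succ j => exact not_below_iterate_parent v₀ j hbelow

theorem IsEscaping.induction (hesc : T.IsEscaping ω v₀) {P : V → Prop}
    (above : ∀ v, T.Below ω v (T.parent ω v₀) → P v) (pull : ∀ v, P (T.F v) → P v) (v : V) :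
    P v := by
  have key (n : ℕ) : ∀ v, T.Below ω ((T.parent ω)^[n] v) (T.parent ω v₀) → P v := by
    induction n with
    | zero => exact above
    | succ n ih =>
      intro v hv
      obtain ⟨i, hi⟩ := below_iff_exists_iterate.1 hv
      have hn : (T.parent ω)^[n] v = (T.parent ω)^[i] v₀ :=
        hesc.base.eq_of_parent_eq (.iterate_parent ω v₀ i) (by
          rw [← iterate_succ_apply' (T.parent ω) n, ← hi, ← iterate_succ_apply,
            iterate_succ_apply'])
      refine pull v (ih _ ?_)
      rw [← (hesc.commute.iterate_right n).eq, hn, (hesc.commute.iterate_right i).eq]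
      exact (Below.iterate_parent ω _ i).trans hesc.map_base_below
  obtain ⟨n, hn⟩ := (eventually_forall_below ω v {T.parent ω v₀}).exists
  exact key n v (hn _ (Finset.mem_singleton_self _))

namespace IsCoveringDegree

variable {dV : V → ℕ} {dE : V → V → ℕ} {Dg : ℕ}

theorem eq_parent (hdeg : T.IsCoveringDegree dV dE) (hcomm : Function.Commute T.F (T.parent ω))
    (c : V) : dV c = dE (T.parent ω c) c := by
  have hsingle : {u | T.G.Adj c u ∧ T.F u = T.F (T.parent ω c)} = {T.parent ω c} := by
    refine Set.eq_singleton_iff_unique_mem.2 ⟨⟨T.adj_parent ω c, rfl⟩, fun u ⟨hu, hFu⟩ => ?_⟩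
    refine ((adj_iff ω).1 hu).resolve_right fun h => parent_parent_ne (ω := ω) (T.F u) ?_
    rw [← hcomm.eq, h, ← hcomm.eq, hFu]
  rw [hdeg.eq_finsum (T.adj_parent ω c), hsingle, finsum_mem_singleton, hdeg.symm]

open Classical in
theorem sum_children (hdeg : T.IsCoveringDegree dV dE)
    (hcomm : Function.Commute T.F (T.parent ω)) {v u : V} (hu : T.parent ω u = T.F v) :
    ∑ c ∈ T.children ω v with T.F c = u, dV c = dV v := by
  obtain ⟨b, rfl, rfl⟩ := exists_parent_eq_of_map_parent_eq (hcomm.eq v) hu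
  have hset : {c | T.G.Adj (T.parent ω b) c ∧ T.F c = T.F b} =
      ((T.children ω (T.parent ω b)).filter (T.F · = T.F b) : Finset V) := by
    ext c
    simp only [Set.mem_ofPred_eq, Finset.coe_filter, mem_children, adj_iff ω,
      and_congr_left_iff, or_iff_right_iff_imp]
    rintro hF rfl
    rw [hcomm.eq, hcomm.eq] at hF
    exact absurd hF (parent_parent_ne (T.F b))
  rw [hdeg.eq_finsum (T.adj_parent ω b).symm, hset, finsum_mem_coe_finset]
  refine Finset.sum_congr rfl fun c hc => ?_
  rw [hdeg.eq_parent hcomm, mem_children.1 (Finset.mem_filter.1 hc).1]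

theorem le_parent (hdeg : T.IsCoveringDegree dV dE) (hcomm : Function.Commute T.F (T.parent ω))
    (c : V) : dV c ≤ dV (T.parent ω c) := by
  classical
  rw [← hdeg.sum_children hcomm (hcomm.eq c).symm]
  exact Finset.single_le_sum (fun _ _ => Nat.zero_le _) (by simp)

theorem le_globalDeg (hdeg : T.IsCoveringDegree dV dE) (hDg : T.IsGlobalDeg dE Dg) (ω : T.G.end)
    (v : V) : dV v ≤ Dg := by
  rw [← hdeg.sum_fiber hDg (T.adj_parent ω (T.F v))]
  exact Finset.single_le_sum (fun _ _ => Nat.zero_le _) (by simp)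

theorem lt_globalDeg (hdeg : T.IsCoveringDegree dV dE) (hDg : T.IsGlobalDeg dE Dg)
    (hesc : T.IsEscaping ω v₀) {n : ℕ} {v : V} (hv : (T.parent ω)^[n + 1] v = v₀) :
    dV v < Dg := by
  classical
  induction n generalizing v with
  | succ n ih => exact (hdeg.le_parent hesc.commute v).trans_lt (ih hv)
  | zero =>
    obtain ⟨c, hc, hcv⟩ := Finset.exists_mem_ne hesc.base.one_lt_card_children v
    have hmap {d : V} (hd : T.parent ω d = v₀) : T.F d = T.F v := by
      obtain ⟨k, hk⟩ := below_iff_exists_iterate.1 hesc.map_base_below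
      have hd' {d : V} (hd : T.parent ω d = v₀) : T.F d = (T.parent ω)^[k] v₀ :=
        hesc.base.eq_of_parent_eq (.iterate_parent ω v₀ k) (by
          rw [← hesc.commute.eq, hd, ← hk, ← iterate_succ_apply, iterate_succ_apply'])
      rw [hd' hd, hd' hv]
    have hle : ∑ d ∈ {v, c}, dV d ≤ ∑ d ∈ T.fiber (T.F v), dV d :=
      Finset.sum_le_sum_of_subset (by simp [Finset.insert_subset_iff, hmap (mem_children.1 hc)])
    rw [hdeg.sum_fiber hDg (T.adj_parent ω _), Finset.sum_pair hcv.symm] at hle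
    have := hdeg.pos c
    omega

end IsCoveringDegree

namespace IsMass

variable {dV : V → ℕ} {dE : V → V → ℕ} {Dg : ℕ} {μ : V → ℚ}

theorem eq_one_of_below (hμ : T.IsMass ω v₀ dV Dg μ) {v : V} (hv : T.Below ω v v₀) :
    μ v = 1 := by
  refine hμ.1 v ?_
  rw [height, if_pos hv]
  positivity

theorem eq_mul (hμ : T.IsMass ω v₀ dV Dg μ) (hdeg : T.IsCoveringDegree dV dE)
    (hDg : T.IsGlobalDeg dE Dg) (v : V) : μ v = (dV v : ℚ) / Dg * μ (T.F v) := by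
  have hdV : (dV v : ℚ) ≠ 0 := by exact_mod_cast (hdeg.pos v).ne'
  have hDg₀ : (Dg : ℚ) ≠ 0 := by
    exact_mod_cast ((hdeg.pos v).trans_le (hdeg.le_globalDeg hDg ω v)).ne'
  rw [hμ.2 v]
  field_simp

theorem sum_fiber (hμ : T.IsMass ω v₀ dV Dg μ) (hdeg : T.IsCoveringDegree dV dE)
    (hDg : T.IsGlobalDeg dE Dg) (w : V) : ∑ v ∈ T.fiber w, μ v = μ w := by
  have hDg₀ : (Dg : ℚ) ≠ 0 := by
    exact_mod_cast ((hdeg.pos w).trans_le (hdeg.le_globalDeg hDg ω w)).ne'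
  calc ∑ v ∈ T.fiber w, μ v
    _ = ∑ v ∈ T.fiber w, (dV v : ℚ) / Dg * μ w := Finset.sum_congr rfl fun v hv => by
      rw [hμ.eq_mul hdeg hDg, mem_fiber.1 hv]
    _ = ((∑ v ∈ T.fiber w, dV v : ℕ) : ℚ) / Dg * μ w := by
      rw [Nat.cast_sum, Finset.sum_div, Finset.sum_mul]
    _ = μ w := by rw [hdeg.sum_fiber hDg (T.adj_parent ω w), div_self hDg₀, one_mul]

theorem nonneg (hμ : T.IsMass ω v₀ dV Dg μ) (hdeg : T.IsCoveringDegree dV dE)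
    (hDg : T.IsGlobalDeg dE Dg) (hesc : T.IsEscaping ω v₀) (v : V) : 0 ≤ μ v := by
  induction v using hesc.induction with
  | above v hv =>
    rw [hμ.eq_one_of_below (hv.trans (.iterate_parent ω v₀ 1))]
    exact zero_le_one
  | pull v ih =>
    rw [hμ.eq_mul hdeg hDg]
    positivity

theorem le_one (hμ : T.IsMass ω v₀ dV Dg μ) (hdeg : T.IsCoveringDegree dV dE)
    (hDg : T.IsGlobalDeg dE Dg) (hesc : T.IsEscaping ω v₀) (v : V) : μ v ≤ 1 := by
  induction v using hesc.induction with
  | above v hv => exact (hμ.eq_one_of_below (hv.trans (.iterate_parent ω v₀ 1))).le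
  | pull v ih =>
    rw [hμ.eq_mul hdeg hDg]
    refine mul_le_one₀ (div_le_one_of_le₀ ?_ (Nat.cast_nonneg Dg)) (hμ.nonneg hdeg hDg hesc _) ih
    exact_mod_cast hdeg.le_globalDeg hDg ω v

theorem sum_children (hμ : T.IsMass ω v₀ dV Dg μ) (hdeg : T.IsCoveringDegree dV dE)
    (hDg : T.IsGlobalDeg dE Dg) (hesc : T.IsEscaping ω v₀) (v : V) :
    ∑ c ∈ T.children ω v, μ c = μ v := by
  classical
  induction v using hesc.induction with
  | above v hv =>
    obtain ⟨n, rfl⟩ := below_iff_exists_iterate.1 hv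
    have hn := Below.iterate_parent ω v₀ n
    rw [← iterate_succ_apply, iterate_succ_apply', hesc.base.children_parent hn,
      Finset.sum_singleton, hμ.eq_one_of_below hn, hμ.eq_one_of_below]
    exact (Below.iterate_parent ω _ 1).trans hn
  | pull v ih =>
    have hmaps : ∀ c ∈ T.children ω v, T.F c ∈ T.children ω (T.F v) := fun c hc => by
      rw [mem_children, ← hesc.commute.eq, mem_children.1 hc]
    rw [← Finset.sum_fiberwise_of_maps_to hmaps, hμ.eq_mul hdeg hDg v, ← ih, Finset.mul_sum]
    refine Finset.sum_congr rfl fun u hu => ?_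
    rw [← hdeg.sum_children hesc.commute (mem_children.1 hu), Nat.cast_sum, Finset.sum_div,
      Finset.sum_mul]
    refine Finset.sum_congr rfl fun c hc => ?_
    rw [hμ.eq_mul hdeg hDg c, (Finset.mem_filter.1 hc).2]

theorem le_pow (hμ : T.IsMass ω v₀ dV Dg μ) (hdeg : T.IsCoveringDegree dV dE)
    (hDg : T.IsGlobalDeg dE Dg) (hesc : T.IsEscaping ω v₀) {k n : ℕ}
    (hk : (T.parent ω)^[k + 1] v₀ = T.F v₀) {v : V} (hv : (T.parent ω)^[(k + 1) * n] v = v₀) :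
    μ v ≤ (((Dg : ℚ) - 1) / Dg) ^ n := by
  induction n generalizing v with
  | zero => simpa using hμ.le_one hdeg hDg hesc v
  | succ n ih =>
    have hlt : dV v + 1 ≤ Dg := hdeg.lt_globalDeg hDg hesc (n := (k + 1) * n + k) hv
    have hcast : (dV v : ℚ) ≤ (Dg : ℚ) - 1 := le_sub_iff_add_le.2 (by exact_mod_cast hlt)
    have hFv : (T.parent ω)^[(k + 1) * n] (T.F v) = v₀ := by
      refine hesc.base.eq_of_iterate_parent_eq (.refl ω v₀) (j := k + 1) ?_
      rw [← iterate_add_apply, hk, ← hv, (hesc.commute.iterate_right _).eq,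
        Nat.mul_succ, Nat.add_comm]
    rw [hμ.eq_mul hdeg hDg, pow_succ']
    exact mul_le_mul (by gcongr) (ih hFv) (hμ.nonneg hdeg hDg hesc _)
      (div_nonneg ((Nat.cast_nonneg _).trans hcast) (Nat.cast_nonneg _))

end IsMass

end TreeDyn

/-! ### Measures on the Julia set -/

namespace TreeDyn

open MeasureTheory ENNReal

theorem exists_probabilityMeasure_of_eventually_eq {X ι : Type*} [TopologicalSpace X]
    [CompactSpace X] [T2Space X] [HasOuterApproxClosed X] [MeasurableSpace X] [BorelSpace X]
    (L : Filter ι) [L.NeBot] (P : ι → ProbabilityMeasure X) :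
    ∃ ν : ProbabilityMeasure X, ∀ s, IsClopen s → ∀ a : ℝ≥0∞,
      (∀ᶠ i in L, (P i : Measure X) s = a) → (ν : Measure X) s = a := by
  obtain ⟨ν, -, hν⟩ := isCompact_univ.ultrafilter_le_nhds (Ultrafilter.map P (.of L)) (by simp)
  refine ⟨ν, fun s hs a ha => ?_⟩
  have hlim : Tendsto (fun i => (P i s : ℝ≥0∞)) (Ultrafilter.of L) (𝓝 (ν s)) :=
    ENNReal.tendsto_coe.2 (ProbabilityMeasure.tendsto_measure_of_isClopen_of_tendsto hν hs)
  simp only [ProbabilityMeasure.ennreal_coeFn_eq_coeFn_toMeasure] at hlim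
  exact tendsto_nhds_unique hlim
    (tendsto_const_nhds.congr' ((ha.filter_mono (Ultrafilter.of_le L)).mono fun _ h => h.symm))

variable {V : Type} {T : TreeDyn V} {ω : T.G.end} {v₀ : V}

theorem measurableSet_cylinder (v : V) : MeasurableSet (T.cylinder ω v) :=
  (isClopen_cylinder v).isOpen.measurableSet

theorem isPiSystem_range_cylinder : IsPiSystem (Set.range (T.cylinder ω)) := by
  rintro _ ⟨v, rfl⟩ _ ⟨w, rfl⟩ ⟨p, hv, hw⟩
  rcases EndBelow.total hv hw with h | h
  · exact ⟨w, (Set.inter_eq_right.2 (cylinder_subset_of_below h)).symm⟩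
  · exact ⟨v, (Set.inter_eq_left.2 (cylinder_subset_of_below h)).symm⟩

theorem sUnion_range_cylinder : ⋃₀ Set.range (T.cylinder ω) = Set.univ :=
  isTopologicalBasis_cylinder.sUnion_eq

theorem borel_eq_generateFrom_cylinder :
    JBorel T ω = MeasurableSpace.generateFrom (Set.range (T.cylinder ω)) :=
  isTopologicalBasis_cylinder.borel_eq_generateFrom

theorem measure_ext_cylinder {ν ν' : Measure (JSet T ω)} [IsFiniteMeasure ν]
    (h : ∀ v, ν (T.cylinder ω v) = ν' (T.cylinder ω v)) : ν = ν' := by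
  have := countable_vertices ω
  refine Measure.ext_of_generateFrom_of_cover_subset borel_eq_generateFrom_cylinder
    isPiSystem_range_cylinder subset_rfl (Set.countable_range _) sUnion_range_cylinder
    (fun s _ => measure_ne_top ν s) ?_
  rintro _ ⟨v, rfl⟩
  exact h v

section Invariance

variable {f : JSet T ω → JSet T ω}

theorem preimage_cylinder (hcomm : Function.Commute T.F (T.parent ω))
    (hf : ∀ p v, p ∈ T.cylinder ω v → f p ∈ T.cylinder ω (T.F v)) (w : V) :
    f ⁻¹' T.cylinder ω w = ⋃ v ∈ T.fiber w, T.cylinder ω v := by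
  ext p
  simp only [Set.mem_preimage, Set.mem_iUnion, mem_fiber, exists_prop]
  refine ⟨fun h => ?_, fun ⟨v, hvw, hv⟩ => hvw ▸ hf p v hv⟩
  obtain ⟨r, -, hr⟩ := exists_ray p
  rcases EndBelow.total (hf p (r 0) (hr 0)) h with hb | hb <;>
    obtain ⟨j, hj⟩ := below_iff_exists_iterate.1 hb
  · obtain ⟨c, hc, hcp⟩ := EndBelow.exists_iterate_parent_eq (hr 0) j
    refine ⟨c, EndBelow.eq_of_commute (hf p c hcp) h (.iterate_self (T.parent ω) j) ?_, hcp⟩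
    rw [← (hcomm.iterate_right j).eq, hc, hj]
  · refine ⟨(T.parent ω)^[j] (r 0), ?_, cylinder_subset_of_below (.iterate_parent ω _ j) (hr 0)⟩
    rw [(hcomm.iterate_right j).eq, hj]

theorem measurable_of_mapsTo_cylinder (hcomm : Function.Commute T.F (T.parent ω))
    (hf : ∀ p v, p ∈ T.cylinder ω v → f p ∈ T.cylinder ω (T.F v)) : Measurable f := by
  refine Continuous.measurable (isTopologicalBasis_cylinder.continuous_iff.2 ?_)
  rintro _ ⟨w, rfl⟩
  rw [preimage_cylinder hcomm hf]
  exact isOpen_biUnion fun v _ => (isClopen_cylinder v).isOpen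

theorem measurePreserving_of_sum_fiber (hcomm : Function.Commute T.F (T.parent ω))
    (hf : ∀ p v, p ∈ T.cylinder ω v → f p ∈ T.cylinder ω (T.F v))
    {ν : Measure (JSet T ω)} [IsFiniteMeasure ν]
    (hν : ∀ w, ∑ v ∈ T.fiber w, ν (T.cylinder ω v) = ν (T.cylinder ω w)) :
    MeasurePreserving f ν ν := by
  have hmeas := measurable_of_mapsTo_cylinder hcomm hf
  refine ⟨hmeas, measure_ext_cylinder fun w => ?_⟩
  rw [Measure.map_apply hmeas (measurableSet_cylinder w), preimage_cylinder hcomm hf,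
    measure_biUnion_finset ?_ fun v _ => measurableSet_cylinder v, hν]
  intro v hv v' hv' hne
  exact disjoint_cylinder hcomm ((mem_fiber.1 hv).trans (mem_fiber.1 hv').symm) hne

end Invariance

section Existence

variable {m : V → ℝ≥0∞}

theorem sum_descendants (hm : ∀ v, ∑ c ∈ T.children ω v, m c = m v) (n : ℕ) (v : V) :
    ∑ y ∈ T.descendants ω n v, m y = m v := by
  classical
  induction n generalizing v with
  | zero => simp [show T.descendants ω 0 v = {v} by ext; simp]
  | succ n ih =>
    have hmaps : ∀ y ∈ T.descendants ω (n + 1) v, (T.parent ω)^[n] y ∈ T.children ω v := by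
      simp [iterate_succ_apply']
    rw [← Finset.sum_fiberwise_of_maps_to hmaps, ← hm v]
    refine Finset.sum_congr rfl fun c hc => ?_
    rw [← ih c]
    congr 1
    ext y
    simp only [Finset.mem_filter, mem_descendants, iterate_succ_apply', and_iff_right_iff_imp]
    rintro rfl
    exact mem_children.1 hc

/-- The `n`-th approximation to a measure on `J(F, v)` giving mass `m y` to each `J(F, y)`: all of
this mass is put at the point `e y`, for the vertices `y` that lie `n` levels below `v`. -/
noncomputable def approxMeasure (m : V → ℝ≥0∞) (e : V → JSet T ω) (v : V) (n : ℕ) :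
    Measure (JSet T ω) :=
  ∑ y ∈ T.descendants ω n v, m y • Measure.dirac (e y)

theorem approxMeasure_cylinder (hm : ∀ v, ∑ c ∈ T.children ω v, m c = m v)
    {e : V → JSet T ω} (he : ∀ v, e v ∈ T.cylinder ω v) {i : ℕ} {v w : V}
    (hw : (T.parent ω)^[i] w = v) (j : ℕ) :
    approxMeasure m e v (i + j) (T.cylinder ω w) = m w := by
  classical
  have hterm : ∀ y ∈ T.descendants ω (i + j) v,
      (m y • Measure.dirac (e y)) (T.cylinder ω w) =
        if (T.parent ω)^[j] y = w then m y else 0 := by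
    intro y hy
    have hiff : e y ∈ T.cylinder ω w ↔ (T.parent ω)^[j] y = w := by
      have hj := cylinder_subset_of_below (.iterate_parent ω y j) (he y)
      refine ⟨fun h => ?_, fun h => h ▸ hj⟩
      refine EndBelow.eq_of_commute hj h (.iterate_self (T.parent ω) i) ?_
      rw [← iterate_add_apply, mem_descendants.1 hy, hw]
    simp [Measure.dirac_apply' _ (measurableSet_cylinder w), Set.indicator_apply, hiff]
  rw [approxMeasure, Measure.finsetSum_apply, Finset.sum_congr rfl hterm, ← Finset.sum_filter,
    ← sum_descendants hm j w]
  congr 1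
  ext y
  simp only [Finset.mem_filter, mem_descendants, iterate_add_apply, and_iff_right_iff_imp]
  rintro rfl
  exact hw

theorem IsBase.exists_measure_cylinder (hbase : T.IsBase ω v₀)
    (hval : ∀ v, (T.G.neighborSet v).ncard ≠ 1)
    (hm : ∀ v, ∑ c ∈ T.children ω v, m c = m v) (hone : ∀ v, T.Below ω v v₀ → m v = 1) :
    ∃ ν : Measure (JSet T ω), IsProbabilityMeasure ν ∧ ∀ v, ν (T.cylinder ω v) = m v := by
  have huniv := hbase.cylinder_eq_univ (.refl ω v₀)
  have : CompactSpace (JSet T ω) := ⟨huniv ▸ isCompact_cylinder v₀⟩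
  have hpoint (v : V) : ∃ p : JSet T ω, p ∈ T.cylinder ω v :=
    (exists_endBelow (ω := ω) hval v).elim fun p hp => ⟨⟨p, hp.ne_infty⟩, hp⟩
  choose e he using hpoint
  have hprob (n : ℕ) : IsProbabilityMeasure (approxMeasure m e v₀ n) := by
    have h := approxMeasure_cylinder hm he (rfl : (T.parent ω)^[0] v₀ = v₀) n
    rw [huniv, hone v₀ (.refl ω v₀), n.zero_add] at h
    exact ⟨h⟩
  obtain ⟨ν, hν⟩ := exists_probabilityMeasure_of_eventually_eq atTop fun n => ⟨_, hprob n⟩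
  refine ⟨ν, ν.2, fun v => ?_⟩
  rcases hbase.below_or_below v with hv | hv
  · rw [hbase.cylinder_eq_univ hv, hone v hv, measure_univ]
  · obtain ⟨i, hi⟩ := below_iff_exists_iterate.1 hv
    refine hν _ (isClopen_cylinder v) _ ?_
    filter_upwards [eventually_ge_atTop i] with n hn
    obtain ⟨j, rfl⟩ := Nat.exists_eq_add_of_le hn
    exact approxMeasure_cylinder hm he hi j

end Existence

namespace IsMass

variable {dV : V → ℕ} {dE : V → V → ℕ} {Dg : ℕ} {μ : V → ℚ}

theorem exists_measure (hμ : T.IsMass ω v₀ dV Dg μ) (hdeg : T.IsCoveringDegree dV dE)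
    (hDg : T.IsGlobalDeg dE Dg) (hesc : T.IsEscaping ω v₀)
    (hval : ∀ v, (T.G.neighborSet v).ncard ≠ 1) :
    ∃ ν : Measure (JSet T ω), IsProbabilityMeasure ν ∧
      ∀ v, ν (T.cylinder ω v) = ENNReal.ofReal (μ v : ℝ) := by
  refine hesc.base.exists_measure_cylinder hval (fun v => ?_) fun v hv => ?_
  · rw [← ENNReal.ofReal_sum_of_nonneg fun c _ => Rat.cast_nonneg.2 (hμ.nonneg hdeg hDg hesc c),
      ← Rat.cast_sum, hμ.sum_children hdeg hDg hesc]
  · rw [hμ.eq_one_of_below hv, Rat.cast_one, ENNReal.ofReal_one]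

variable {ν : Measure (JSet T ω)}

theorem measurePreserving (hμ : T.IsMass ω v₀ dV Dg μ) (hdeg : T.IsCoveringDegree dV dE)
    (hDg : T.IsGlobalDeg dE Dg) (hesc : T.IsEscaping ω v₀) [IsFiniteMeasure ν]
    (hν : ∀ v, ν (T.cylinder ω v) = ENNReal.ofReal (μ v : ℝ)) {f : JSet T ω → JSet T ω}
    (hf : ∀ p v, p ∈ T.cylinder ω v → f p ∈ T.cylinder ω (T.F v)) : MeasurePreserving f ν ν := by
  refine measurePreserving_of_sum_fiber hesc.commute hf fun w => ?_
  simp only [hν]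
  rw [← ENNReal.ofReal_sum_of_nonneg fun v _ => Rat.cast_nonneg.2 (hμ.nonneg hdeg hDg hesc v),
    ← Rat.cast_sum, hμ.sum_fiber hdeg hDg]

theorem measure_singleton (hμ : T.IsMass ω v₀ dV Dg μ) (hdeg : T.IsCoveringDegree dV dE)
    (hDg : T.IsGlobalDeg dE Dg) (hesc : T.IsEscaping ω v₀)
    (hν : ∀ v, ν (T.cylinder ω v) = ENNReal.ofReal (μ v : ℝ)) (p : JSet T ω) : ν {p} = 0 := by
  have hDg₁ : (1 : ℝ) ≤ Dg := by
    exact_mod_cast (hdeg.pos v₀).trans_le (hdeg.le_globalDeg hDg ω v₀)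
  have hr₀ : 0 ≤ ((Dg : ℝ) - 1) / Dg := div_nonneg (sub_nonneg.2 hDg₁) (Nat.cast_nonneg Dg)
  have hr₁ : ((Dg : ℝ) - 1) / Dg < 1 := (div_lt_one (zero_lt_one.trans_le hDg₁)).2 (sub_one_lt _)
  obtain ⟨k, hk⟩ := below_iff_exists_iterate.1 hesc.map_base_below
  have hp : p ∈ T.cylinder ω v₀ := hesc.base.cylinder_eq_univ (.refl ω v₀) ▸ Set.mem_univ p
  have hle (n : ℕ) : ν {p} ≤ ENNReal.ofReal ((((Dg : ℝ) - 1) / Dg) ^ n) := by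
    obtain ⟨v, hv, hvp⟩ := EndBelow.exists_iterate_parent_eq hp ((k + 1) * n)
    calc ν {p} ≤ ν (T.cylinder ω v) := measure_mono (Set.singleton_subset_iff.2 hvp)
      _ = ENNReal.ofReal (μ v : ℝ) := hν v
      _ ≤ ENNReal.ofReal ((((Dg : ℝ) - 1) / Dg) ^ n) :=
        ENNReal.ofReal_le_ofReal (by exact_mod_cast hμ.le_pow hdeg hDg hesc hk hv)
  have hlim := ENNReal.tendsto_ofReal (tendsto_pow_atTop_nhds_zero_of_lt_one hr₀ hr₁)
  rw [ENNReal.ofReal_zero] at hlim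
  exact le_antisymm (ge_of_tendsto' hlim hle) zero_le

end IsMass

end TreeDyn

open MeasureTheory in
theorem exists_unique_invariant_measure_general {V : Type} (T : TreeDyn V) (ω : T.G.end)
    (hiso : ∀ e, IsIsolatedEnd T.G e → e = ω) (hval : ∀ v, (T.G.neighborSet v).ncard ≠ 1)
    (horb : ∀ v, ∃ w, T.GrandOrbit v w ∧ 3 ≤ (T.G.neighborSet w).ncard)
    {dV : V → ℕ} {dE : V → V → ℕ} (hdeg : T.IsCoveringDegree dV dE)
    {v₀ : V} (hbase : T.IsBase ω v₀) {Dg : ℕ} (hDg : T.IsGlobalDeg dE Dg)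
    {μ : V → ℚ} (hμ : T.IsMass ω v₀ dV Dg μ) {f : JSet T ω → JSet T ω}
    (hf : ∀ p v, p ∈ T.cylinder ω v → f p ∈ T.cylinder ω (T.F v)) :
    (∃! ν : Measure (JSet T ω), IsProbabilityMeasure ν ∧
      ∀ v, ν (T.cylinder ω v) = ENNReal.ofReal (μ v : ℝ)) ∧
    ∀ ν : Measure (JSet T ω), (IsProbabilityMeasure ν ∧
        ∀ v, ν (T.cylinder ω v) = ENNReal.ofReal (μ v : ℝ)) →
      (∀ A, MeasurableSet A → ν (f ⁻¹' A) = ν A) ∧ ∀ p, ν {p} = 0 := by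
  have hesc := hbase.isEscaping (hdeg.commute_parent hDg hbase hiso hval) horb
  obtain ⟨ν, hprob, hν⟩ := hμ.exists_measure hdeg hDg hesc hval
  refine ⟨⟨ν, ⟨hprob, hν⟩, fun ν' ⟨_, hν'⟩ => ?_⟩, fun ν' ⟨_, hν'⟩ => ⟨fun A hA => ?_, ?_⟩⟩
  · exact TreeDyn.measure_ext_cylinder fun v => (hν' v).trans (hν v).symm
  · exact (hμ.measurePreserving hdeg hDg hesc hν' hf).measure_preimage hA.nullMeasurableSet
  · exact hμ.measure_singleton hdeg hDg hesc hν'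

open MeasureTheory in
/-- **The invariant measure on the Julia set.**
Let `F : T → T` be a polynomial-like branched covering with local degree
function `(dV, dE)`, global degree `Dg`, base `v₀` and mass function `μ`,
and let `FJ : J(F) → J(F)` be the induced boundary map on the Julia set
`J(F) = ∂T ∖ {infty}` (characterized by: if an end `p` lies below a vertex
`v` then `FJ p` lies below `F v`).  Then there is a unique Borel probability
measure `ν` on `J(F)` with `ν (J(F,v)) = μ v` for every vertex `v`, where
`J(F,v)` is the set of ends below `v`; moreover `ν` is invariant under `FJ`
and has no atoms. -/
theorem exists_unique_invariant_measure
    {V : Type} (T : TreeDyn V) (infty : T.G.end)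
    (hpl : T.IsPolyLike infty)
    (dV : V → ℕ) (dE : V → V → ℕ) (hdeg : T.IsLocalDeg dV dE)
    (v₀ : V) (hbase : T.IsBase infty v₀)
    (Dg : ℕ) (hDg : T.IsGlobalDeg dE Dg)
    (μ : V → ℚ) (hμ : T.IsMass infty v₀ dV Dg μ)
    (FJ : JSet T infty → JSet T infty)
    (hFJ : ∀ (p : JSet T infty) (v : V),
      T.EndBelow infty v p.val → T.EndBelow infty (T.F v) (FJ p).val) :
    (∃! ν : @Measure (JSet T infty) (JBorel T infty),
      @IsProbabilityMeasure (JSet T infty) (JBorel T infty) ν ∧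
      ∀ v : V, ν {p : JSet T infty | T.EndBelow infty v p.val} =
        ENNReal.ofReal ((μ v : ℝ))) ∧
    (∀ ν : @Measure (JSet T infty) (JBorel T infty),
      (@IsProbabilityMeasure (JSet T infty) (JBorel T infty) ν ∧
        ∀ v : V, ν {p : JSet T infty | T.EndBelow infty v p.val} =
          ENNReal.ofReal ((μ v : ℝ))) →
      ((∀ A : Set (JSet T infty),
          @MeasurableSet (JSet T infty) (JBorel T infty) A → ν (FJ ⁻¹' A) = ν A) ∧
        (∀ p : JSet T infty, ν {p} = 0))) :=
  exists_unique_invariant_measure_general T infty hpl.2.2.1 hpl.2.2.2.1 hpl.2.2.2.2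
    ⟨hdeg.1, hdeg.2.1, hdeg.2.2.2.2⟩ hbase hDg hμ hFJ
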